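/- Let Φ be a reduced crystallographic root system in a finite-dimensional real inner product space, with a fixed base (set of simple roots) Δ and Weyl group W. Fix a simple root α ∈ Δ and set θ = Δ \ {α}. Then there exists a unique element w ∈ W such that w maps every root in θ to a simple root (i.e. w(θ) ⊆ Δ) while w(α) is a negative root with respect to Δ. -/

import Mathlib

/-!
STATEMENT 0: Let Φ be a reduced crystallographic root system in a finite-dimensional real
inner product space, with a fixed base (set of simple roots) Δ and Weyl group W.
Fix a simple root α ∈ Δ and set θ = Δ \ {α}.  Then there exists a unique element w ∈ W
such that w maps every root in θ to a simple root (w(θ) ⊆ Δ) while w(α) is a negative root.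
-/

open scoped InnerProductSpace

variable {V : Type*} [NormedAddCommGroup V] [InnerProductSpace ℝ V]

/-- The set of reflections `s_a : x ↦ x - (2⟪x,a⟫/⟪a,a⟫)·a` in the roots `a ∈ Φ`,
viewed as linear automorphisms of the ambient space. -/
def rootReflections (Φ : Finset V) : Set (V ≃ₗ[ℝ] V) :=
  {f | ∃ a ∈ Φ, ∀ x : V, f x = x - (2 * ⟪x, a⟫_ℝ / ⟪a, a⟫_ℝ) • a}

/-- The Weyl group of `Φ`: the subgroup of linear automorphisms generated by the
reflections in the roots. -/
def weylGroup (Φ : Finset V) : Subgroup (V ≃ₗ[ℝ] V) :=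
  Subgroup.closure (rootReflections Φ)

/-- `β` is a negative root of `Φ` with respect to the base `Δ`: it is a root all of whose
coefficients in the (integral) expansion over the simple roots are non-positive. -/
def IsNegRoot (Φ Δ : Finset V) (β : V) : Prop :=
  β ∈ Φ ∧ ∃ c : V → ℤ, β = ∑ γ ∈ Δ, (c γ : ℝ) • γ ∧ ∀ γ ∈ Δ, c γ ≤ 0


namespace RSAux

/-- The hypotheses of the theorem, bundled. -/
structure RS (Φ Δ : Finset V) : Prop where
  h0 : (0 : V) ∉ Φ
  hspan : Submodule.span ℝ (Φ : Set V) = ⊤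
  hrefl : ∀ a ∈ Φ, ∀ b ∈ Φ, b - (2 * ⟪b, a⟫_ℝ / ⟪a, a⟫_ℝ) • a ∈ Φ
  hcryst : ∀ a ∈ Φ, ∀ b ∈ Φ, ∃ n : ℤ, 2 * ⟪b, a⟫_ℝ / ⟪a, a⟫_ℝ = (n : ℝ)
  hred : ∀ a ∈ Φ, ∀ t : ℝ, t • a ∈ Φ → t = 1 ∨ t = -1
  hΔΦ : (Δ : Set V) ⊆ (Φ : Set V)
  hind : LinearIndependent ℝ (fun γ : (Δ : Set V) => (γ : V))
  hbase : ∀ β ∈ Φ, ∃ c : V → ℤ,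
      β = ∑ γ ∈ Δ, (c γ : ℝ) • γ ∧ ((∀ γ ∈ Δ, 0 ≤ c γ) ∨ (∀ γ ∈ Δ, c γ ≤ 0))

/-- reflection, as a linear map -/
noncomputable def sl (a : V) : V →ₗ[ℝ] V where
  toFun x := x - (2 * ⟪x, a⟫_ℝ / ⟪a, a⟫_ℝ) • a
  map_add' x y := by
    rw [inner_add_left, mul_add, add_div, add_smul]; abel
  map_smul' t x := by
    rw [inner_smul_left, RingHom.id_apply, smul_sub, smul_smul]
    congr 2
    simp; ring

lemma sl_apply (a x : V) : sl a x = x - (2 * ⟪x, a⟫_ℝ / ⟪a, a⟫_ℝ) • a := rfl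

lemma sl_invol (a : V) : Function.Involutive (sl a) := by
  intro x
  by_cases ha : a = 0
  · subst ha; simp [sl_apply]
  · have h : ⟪a, a⟫_ℝ ≠ 0 := inner_self_ne_zero.mpr ha
    simp only [sl_apply, inner_sub_left, inner_smul_left]
    rw [sub_sub, ← add_smul]
    have : 2 * ⟪x, a⟫_ℝ / ⟪a, a⟫_ℝ + 2 * (⟪x, a⟫_ℝ - (starRingEnd ℝ) (2 * ⟪x, a⟫_ℝ / ⟪a, a⟫_ℝ)
        * ⟪a, a⟫_ℝ) / ⟪a, a⟫_ℝ = 0 := by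
      simp only [conj_trivial]; field_simp; ring
    rw [this]; simp

/-- reflection -/
noncomputable def s (a : V) : V ≃ₗ[ℝ] V := LinearEquiv.ofInvolutive (sl a) (sl_invol a)

lemma s_apply (a x : V) : s a x = x - (2 * ⟪x, a⟫_ℝ / ⟪a, a⟫_ℝ) • a := rfl

lemma s_s (a x : V) : s a (s a x) = x := sl_invol a x

lemma s_mul_s (a : V) : s a * s a = 1 := by
  ext x; exact s_s a x

lemma s_self (a : V) (ha : a ≠ 0) : s a a = -a := by
  have h : ⟪a, a⟫_ℝ ≠ 0 := inner_self_ne_zero.mpr ha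
  rw [s_apply, mul_div_assoc, div_self h, mul_one, two_smul]; abel

lemma s_neg (a : V) : s (-a) = s a := by
  ext x; simp [s_apply, neg_div]

lemma s_inner (a x y : V) : ⟪s a x, s a y⟫_ℝ = ⟪x, y⟫_ℝ := by
  by_cases ha : a = 0
  · subst ha; simp [s_apply]
  · have h : ⟪a, a⟫_ℝ ≠ 0 := inner_self_ne_zero.mpr ha
    simp only [s_apply, inner_sub_left, inner_smul_left, inner_sub_right, inner_smul_right,
      conj_trivial, real_inner_comm a y]
    field_simp; ring

variable {Φ Δ : Finset V}

lemma mem_reflections (f : V ≃ₗ[ℝ] V) : f ∈ rootReflections Φ ↔ ∃ a ∈ Φ, f = s a := by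
  constructor
  · rintro ⟨a, ha, h⟩
    exact ⟨a, ha, by ext x; rw [h, s_apply]⟩
  · rintro ⟨a, ha, rfl⟩
    exact ⟨a, ha, fun x => rfl⟩

lemma s_mem_W {a : V} (ha : a ∈ Φ) : s a ∈ weylGroup Φ :=
  Subgroup.subset_closure ((mem_reflections _).2 ⟨a, ha, rfl⟩)

lemma W_inner {w : V ≃ₗ[ℝ] V} (hw : w ∈ weylGroup Φ) : ∀ x y, ⟪w x, w y⟫_ℝ = ⟪x, y⟫_ℝ := by
  induction hw using Subgroup.closure_induction with
  | mem f hf =>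
    obtain ⟨a, -, rfl⟩ := (mem_reflections f).1 hf
    exact s_inner a
  | one => intro x y; rfl
  | mul f g _ _ hf hg => intro x y; rw [LinearEquiv.mul_apply, LinearEquiv.mul_apply, hf, hg]
  | inv f _ hf =>
    intro x y
    rw [← hf (f⁻¹ x)]
    rw [← LinearEquiv.mul_apply, ← LinearEquiv.mul_apply, mul_inv_cancel]; rfl

lemma conj_s {w : V ≃ₗ[ℝ] V} (hw : ∀ x y, ⟪w x, w y⟫_ℝ = ⟪x, y⟫_ℝ) (a : V) :
    w * s a = s (w a) * w := by
  ext x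
  simp only [LinearEquiv.mul_apply, LinearEquiv.coe_coe, s_apply, hw, map_sub, map_smul]

namespace RS

lemma s_mem (H : RS Φ Δ) {a b : V} (ha : a ∈ Φ) (hb : b ∈ Φ) : s a b ∈ Φ := H.hrefl a ha b hb

lemma ne_zero (H : RS Φ Δ) {a : V} (ha : a ∈ Φ) : a ≠ 0 := fun h => H.h0 (h ▸ ha)

lemma neg_mem (H : RS Φ Δ) {a : V} (ha : a ∈ Φ) : -a ∈ Φ := by
  rw [← s_self a (H.ne_zero ha)]; exact H.s_mem ha ha

lemma W_mem (H : RS Φ Δ) {w : V ≃ₗ[ℝ] V} (hw : w ∈ weylGroup Φ) :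
    ∀ b ∈ Φ, w b ∈ Φ := by
  induction hw using Subgroup.closure_induction'' with
  | mem f hf =>
    obtain ⟨a, ha, rfl⟩ := (mem_reflections f).1 hf
    exact fun b hb => H.s_mem ha hb
  | inv_mem f hf =>
    obtain ⟨a, ha, rfl⟩ := (mem_reflections f).1 hf
    rw [inv_eq_of_mul_eq_one_left (s_mul_s a)]
    exact fun b hb => H.s_mem ha hb
  | one => intro x hx; exact hx
  | mul f g _ _ hf hg => intro x hx; exact hf _ (hg _ hx)

lemma finite_W (H : RS Φ Δ) : Finite (weylGroup Φ) := by
  refine Finite.of_injective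
    (fun (w : weylGroup Φ) (x : Φ) => (⟨w.1 x.1, H.W_mem w.2 _ x.2⟩ : Φ)) ?_
  intro w w' h
  apply Subtype.ext
  apply LinearEquiv.toLinearMap_injective
  apply LinearMap.ext_on H.hspan
  intro x hx
  have := congrFun h ⟨x, hx⟩
  exact congrArg Subtype.val this

/-- dual vectors -/
lemma exists_dual [FiniteDimensional ℝ V] (H : RS Φ Δ) (g : V → ℝ) :
    ∃ v : V, ∀ γ ∈ Δ, ⟪v, γ⟫_ℝ = g γ := by
  have hi : LinearIndepOn ℝ id (Δ : Set V) := H.hind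
  let b := Module.Basis.extend hi
  let f : V →ₗ[ℝ] ℝ := b.constr ℝ (fun i => g i)
  refine ⟨(InnerProductSpace.toDual ℝ V).symm (LinearMap.toContinuousLinearMap f), ?_⟩
  intro γ hγ
  rw [InnerProductSpace.toDual_symm_apply]
  have hm : γ ∈ LinearIndepOn.extend hi
      (Set.subset_univ _) :=
    LinearIndepOn.subset_extend hi _ hγ
  have : b ⟨γ, hm⟩ = γ := by simp [b]
  change f γ = g γ
  conv_lhs => rw [← this]
  simp only [f]
  rw [Module.Basis.constr_basis]

variable {ρ : V}

lemma pos_coeff (H : RS Φ Δ) (hρ : ∀ γ ∈ Δ, ⟪ρ, γ⟫_ℝ = 1) {β : V} (hβ : β ∈ Φ)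
    (hp : 0 ≤ ⟪ρ, β⟫_ℝ) :
    ∃ c : V → ℤ, β = ∑ γ ∈ Δ, (c γ : ℝ) • γ ∧ ∀ γ ∈ Δ, 0 ≤ c γ := by
  obtain ⟨c, hc, h | h⟩ := H.hbase β hβ
  · exact ⟨c, hc, h⟩
  · exfalso
    have e : ⟪ρ, β⟫_ℝ = ∑ γ ∈ Δ, (c γ : ℝ) := by
      rw [hc, inner_sum]
      refine Finset.sum_congr rfl fun γ hγ => ?_
      rw [inner_smul_right, hρ γ hγ, mul_one]
    have h2 : ∀ γ ∈ Δ, (c γ : ℝ) ≤ 0 := fun γ hγ => by exact_mod_cast h γ hγ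
    have h3 : ∑ γ ∈ Δ, (c γ : ℝ) = 0 := le_antisymm (Finset.sum_nonpos h2) (e ▸ hp)
    have h4 := (Finset.sum_eq_zero_iff_of_nonpos h2).1 h3
    apply H.ne_zero hβ
    rw [hc]
    exact Finset.sum_eq_zero fun γ hγ => by rw [h4 γ hγ, zero_smul]

lemma inner_ne (H : RS Φ Δ) (hρ : ∀ γ ∈ Δ, ⟪ρ, γ⟫_ℝ = 1) {β : V} (hβ : β ∈ Φ) :
    ⟪ρ, β⟫_ℝ ≠ 0 := by
  intro h0
  obtain ⟨c, hc, h⟩ := H.pos_coeff hρ hβ h0.ge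
  have e : ⟪ρ, β⟫_ℝ = ∑ γ ∈ Δ, (c γ : ℝ) := by
    conv_lhs => rw [hc, inner_sum]
    refine Finset.sum_congr rfl fun γ hγ => ?_
    rw [inner_smul_right, hρ γ hγ, mul_one]
  have h2 : ∀ γ ∈ Δ, 0 ≤ (c γ : ℝ) := fun γ hγ => by exact_mod_cast h γ hγ
  have h4 := (Finset.sum_eq_zero_iff_of_nonneg h2).1 (e ▸ h0)
  apply H.ne_zero hβ
  rw [hc]
  exact Finset.sum_eq_zero fun γ hγ => by rw [h4 γ hγ, zero_smul]

lemma dom_nonneg (H : RS Φ Δ) (hρ : ∀ γ ∈ Δ, ⟪ρ, γ⟫_ℝ = 1) {β : V} (hβ : β ∈ Φ)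
    (hp : 0 ≤ ⟪ρ, β⟫_ℝ) {x : V} (hx : ∀ γ ∈ Δ, 0 ≤ ⟪x, γ⟫_ℝ) : 0 ≤ ⟪x, β⟫_ℝ := by
  obtain ⟨c, hc, h⟩ := H.pos_coeff hρ hβ hp
  rw [hc, inner_sum]
  refine Finset.sum_nonneg fun γ hγ => ?_
  rw [inner_smul_right]
  exact mul_nonneg (by exact_mod_cast h γ hγ) (hx γ hγ)

lemma dom_nonpos (H : RS Φ Δ) (hρ : ∀ γ ∈ Δ, ⟪ρ, γ⟫_ℝ = 1) {β : V} (hβ : β ∈ Φ)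
    (hp : ⟪ρ, β⟫_ℝ ≤ 0) {x : V} (hx : ∀ γ ∈ Δ, 0 ≤ ⟪x, γ⟫_ℝ) : ⟪x, β⟫_ℝ ≤ 0 := by
  have := H.dom_nonneg hρ (H.neg_mem hβ) (by rw [inner_neg_right]; linarith) hx
  rw [inner_neg_right] at this; linarith

/-- A simple reflection permutes the positive roots other than its own root. -/
lemma eq_of_s_neg [FiniteDimensional ℝ V] (H : RS Φ Δ) (hρ : ∀ γ ∈ Δ, ⟪ρ, γ⟫_ℝ = 1) {β δ : V}
    (hβ : β ∈ Φ) (hδ : δ ∈ Δ) (hp : 0 < ⟪ρ, β⟫_ℝ) (hn : ⟪ρ, s δ β⟫_ℝ ≤ 0) : β = δ := by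
  classical
  obtain ⟨c, hc, h⟩ := H.pos_coeff hρ hβ hp.le
  have key : ∀ γ ∈ Δ, γ ≠ δ → (c γ : ℝ) = 0 := by
    intro γ hγ hne
    obtain ⟨g, hg⟩ := H.exists_dual (fun x => if x = γ then 1 else 0)
    have hdom : ∀ x ∈ Δ, 0 ≤ ⟪g, x⟫_ℝ := by
      intro x hx; rw [hg x hx]; split_ifs <;> norm_num
    have e : ⟪g, β⟫_ℝ = c γ := by
      rw [hc, inner_sum, Finset.sum_eq_single γ]
      · rw [inner_smul_right, hg γ hγ]; simp
      · intro x hx hxγ; rw [inner_smul_right, hg x hx]; simp [hxγ]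
      · intro h; exact absurd hγ h
    have h1 := H.dom_nonneg hρ hβ hp.le hdom
    have h2 := H.dom_nonpos hρ (H.s_mem (H.hΔΦ hδ) hβ) hn hdom
    rw [s_apply, inner_sub_right, inner_smul_right, hg δ hδ, if_neg (Ne.symm hne)] at h2
    linarith
  have hb : β = (c δ : ℝ) • δ := by
    conv_lhs => rw [hc]
    rw [Finset.sum_eq_single δ]
    · intro x hx hxδ; rw [key x hx hxδ, zero_smul]
    · intro h; exact absurd hδ h
  rcases H.hred δ (H.hΔΦ hδ) (c δ) (hb ▸ hβ) with h1 | h1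
  · rw [hb, h1, one_smul]
  · have h3 : (0:ℝ) ≤ c δ := by exact_mod_cast h δ hδ
    linarith

/-- product of reflections along a list -/
noncomputable def wd (l : List V) : V ≃ₗ[ℝ] V := (l.map s).prod

lemma wd_cons (a : V) (l : List V) : wd (a :: l) = s a * wd l := by simp [wd]

lemma wd_append (l l' : List V) : wd (l ++ l') = wd l * wd l' := by simp [wd]

lemma wd_mem (H : RS Φ Δ) (l : List V) (hl : ∀ x ∈ l, x ∈ Δ) : wd l ∈ weylGroup Φ := by
  induction l with
  | nil => simp only [wd, List.map_nil, List.prod_nil]; exact one_mem _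
  | cons a l ih =>
    rw [wd_cons]
    exact mul_mem (s_mem_W (H.hΔΦ (hl a (by simp)))) (ih fun x hx => hl x (by simp [hx]))

/-- deletion -/
lemma deletion [FiniteDimensional ℝ V] (H : RS Φ Δ) (hρ : ∀ γ ∈ Δ, ⟪ρ, γ⟫_ℝ = 1) {γ : V}
    (hγ : γ ∈ Δ) (l : List V) (hl : ∀ x ∈ l, x ∈ Δ) (hn : ⟪ρ, wd l γ⟫_ℝ < 0) :
    ∃ l' : List V, (∀ x ∈ l', x ∈ Δ) ∧ l'.length < l.length ∧ wd l * s γ = wd l' := by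
  induction l with
  | nil =>
    exfalso
    have : wd ([] : List V) γ = γ := by simp [wd]
    rw [this, hρ γ hγ] at hn; linarith
  | cons a l ih =>
    have hl' : ∀ x ∈ l, x ∈ Δ := fun x hx => hl x (by simp [hx])
    have ha : a ∈ Δ := hl a (by simp)
    have hmem := H.wd_mem l hl'
    have hr : wd l γ ∈ Φ := H.W_mem hmem _ (H.hΔΦ hγ)
    rcases lt_or_gt_of_ne (H.inner_ne hρ hr) with h | h
    · obtain ⟨l', h1, h2, h3⟩ := ih hl' h
      refine ⟨a :: l', ?_, by simpa using h2, ?_⟩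
      · intro x hx
        rcases List.mem_cons.1 hx with rfl | hx
        · exact ha
        · exact h1 x hx
      · rw [wd_cons, wd_cons, mul_assoc, h3]
    · refine ⟨l, hl', by simp, ?_⟩
      rw [wd_cons, LinearEquiv.mul_apply] at hn
      have e := H.eq_of_s_neg hρ hr ha h hn.le
      rw [wd_cons, mul_assoc, conj_s (W_inner hmem), e, ← mul_assoc, s_mul_s, one_mul]

lemma wd_eq_one [FiniteDimensional ℝ V] (H : RS Φ Δ) (hρ : ∀ γ ∈ Δ, ⟪ρ, γ⟫_ℝ = 1) (n : ℕ) :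
    ∀ (l : List V), l.length ≤ n → (∀ x ∈ l, x ∈ Δ) → (∀ γ ∈ Δ, 0 < ⟪ρ, wd l γ⟫_ℝ) →
      wd l = 1 := by
  induction n with
  | zero =>
    intro l hn _ _
    have : l = [] := List.length_eq_zero_iff.1 (by omega)
    simp [this, wd]
  | succ n ih =>
    intro l hn hl hp
    rcases List.eq_nil_or_concat l with rfl | ⟨l1, γ, rfl⟩
    · simp [wd]
    · rw [List.concat_eq_append] at *
      have hγ : γ ∈ Δ := hl γ (by simp)
      have e : wd (l1 ++ [γ]) = wd l1 * s γ := by rw [wd_append]; simp [wd]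
      have hneg : ⟪ρ, wd l1 γ⟫_ℝ < 0 := by
        have := hp γ hγ
        rw [e, LinearEquiv.mul_apply, s_self γ (H.ne_zero (H.hΔΦ hγ)), map_neg,
          inner_neg_right] at this
        linarith
      obtain ⟨l', h1, h2, h3⟩ := H.deletion hρ hγ l1 (fun x hx => hl x (by simp [hx])) hneg
      rw [e, h3] at hp ⊢
      refine ih l' ?_ h1 hp
      simp at hn; omega

/-- every reflection is a product of simple reflections -/
lemma s_simple [FiniteDimensional ℝ V] (H : RS Φ Δ) (hρ : ∀ γ ∈ Δ, ⟪ρ, γ⟫_ℝ = 1) (n : ℕ) :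
    ∀ β ∈ Φ, 0 < ⟪ρ, β⟫_ℝ → ⟪ρ, β⟫_ℝ ≤ n →
      s β ∈ Subgroup.closure (s '' (Δ : Set V)) := by
  induction n with
  | zero => intro β _ h1 h2; exfalso; simp at h2; linarith
  | succ n ih =>
    intro β hβ hp hn
    by_cases hs : β ∈ Δ
    · exact Subgroup.subset_closure ⟨β, hs, rfl⟩
    obtain ⟨γ, hγ, hpos⟩ : ∃ γ ∈ Δ, 0 < ⟪β, γ⟫_ℝ := by
      by_contra! hcon
      have h1 := H.dom_nonneg (x := -β) hρ hβ hp.le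
        (fun γ hγ => by rw [inner_neg_left]; linarith [hcon γ hγ])
      rw [inner_neg_left] at h1
      have h2 : 0 < ⟪β, β⟫_ℝ := real_inner_self_pos.2 (H.ne_zero hβ)
      linarith
    have hγΦ : γ ∈ Φ := H.hΔΦ hγ
    obtain ⟨k, hk⟩ := H.hcryst γ hγΦ β hβ
    have hk0 : (0:ℝ) < k := by
      rw [← hk]
      have : 0 < ⟪γ, γ⟫_ℝ := real_inner_self_pos.2 (H.ne_zero hγΦ)
      positivity
    have hk1 : (1:ℝ) ≤ k := by
      have : (0:ℤ) < k := by exact_mod_cast hk0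
      exact_mod_cast this
    have hpos' : 0 < ⟪ρ, s γ β⟫_ℝ := by
      by_contra! hcon
      exact hs (H.eq_of_s_neg hρ hβ hγ hp hcon ▸ hγ)
    have hlt : ⟪ρ, s γ β⟫_ℝ ≤ n := by
      rw [s_apply, hk, inner_sub_right, inner_smul_right, hρ γ hγ]
      push_cast at hn; linarith
    have hm := ih _ (H.s_mem hγΦ hβ) hpos' hlt
    have hg : s γ ∈ Subgroup.closure (s '' (Δ : Set V)) := Subgroup.subset_closure ⟨γ, hγ, rfl⟩
    have e : s β = s γ * s (s γ β) * s γ := by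
      have := conj_s (s_inner γ) β
      rw [mul_assoc, ← mul_assoc] at *
      rw [mul_assoc, ← this, ← mul_assoc, s_mul_s, one_mul]
    rw [e]
    exact mul_mem (mul_mem hg hm) hg

lemma W_word [FiniteDimensional ℝ V] (H : RS Φ Δ) (hρ : ∀ γ ∈ Δ, ⟪ρ, γ⟫_ℝ = 1)
    {w : V ≃ₗ[ℝ] V} (hw : w ∈ weylGroup Φ) :
    ∃ l : List V, (∀ x ∈ l, x ∈ Δ) ∧ w = wd l := by
  have h1 : w ∈ Subgroup.closure (s '' (Δ : Set V)) := by
    refine (Subgroup.closure_le _).2 ?_ hw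
    intro f hf
    obtain ⟨β, hβ, rfl⟩ := (mem_reflections f).1 hf
    rcases lt_or_gt_of_ne (H.inner_ne hρ hβ) with h | h
    · rw [← s_neg]
      obtain ⟨n, hn⟩ := exists_nat_ge ⟪ρ, -β⟫_ℝ
      exact H.s_simple hρ n _ (H.neg_mem hβ) (by rw [inner_neg_right]; linarith) hn
    · obtain ⟨n, hn⟩ := exists_nat_ge ⟪ρ, β⟫_ℝ
      exact H.s_simple hρ n _ hβ h hn
  induction h1 using Subgroup.closure_induction'' with
  | mem f hf =>
    obtain ⟨a, ha, rfl⟩ := hf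
    exact ⟨[a], by simpa using ha, by simp [wd]⟩
  | inv_mem f hf =>
    obtain ⟨a, ha, rfl⟩ := hf
    exact ⟨[a], by simpa using ha, by rw [inv_eq_of_mul_eq_one_left (s_mul_s a)]; simp [wd]⟩
  | one => exact ⟨[], by simp, by simp [wd]⟩
  | mul f g hf' hg' hf hg =>
    have hle : Subgroup.closure (s '' (Δ : Set V)) ≤ weylGroup Φ := by
      refine (Subgroup.closure_le _).2 ?_
      rintro _ ⟨a, ha, rfl⟩
      exact s_mem_W (H.hΔΦ ha)
    obtain ⟨l, h1, rfl⟩ := hf (hle hf')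
    obtain ⟨l', h2, rfl⟩ := hg (hle hg')
    refine ⟨l ++ l', ?_, by rw [wd_append]⟩
    intro x hx
    rcases List.mem_append.1 hx with h | h
    · exact h1 x h
    · exact h2 x h

lemma free [FiniteDimensional ℝ V] (H : RS Φ Δ) (hρ : ∀ γ ∈ Δ, ⟪ρ, γ⟫_ℝ = 1)
    {w : V ≃ₗ[ℝ] V} (hw : w ∈ weylGroup Φ) (hp : ∀ γ ∈ Δ, 0 < ⟪ρ, w γ⟫_ℝ) : w = 1 := by
  obtain ⟨l, hl, rfl⟩ := H.W_word hρ hw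
  exact H.wd_eq_one hρ _ l le_rfl hl hp

/-- Every vector can be moved into the closed dominant chamber. -/
lemma exists_dominant [FiniteDimensional ℝ V] (H : RS Φ Δ) (hρ : ∀ γ ∈ Δ, ⟪ρ, γ⟫_ℝ = 1) (v : V) :
    ∃ w ∈ weylGroup Φ, ∀ γ ∈ Δ, 0 ≤ ⟪w v, γ⟫_ℝ := by
  have := H.finite_W
  obtain ⟨w, hw⟩ := Finite.exists_max (fun w : weylGroup Φ => ⟪ρ, w.1 v⟫_ℝ)
  refine ⟨w.1, w.2, fun γ hγ => ?_⟩
  have h := hw ⟨s γ * w.1, mul_mem (s_mem_W (H.hΔΦ hγ)) w.2⟩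
  simp only [LinearEquiv.mul_apply] at h
  rw [s_apply, inner_sub_right, inner_smul_right, hρ γ hγ] at h
  have hγp : 0 < ⟪γ, γ⟫_ℝ := real_inner_self_pos.2 (H.ne_zero (H.hΔΦ hγ))
  by_contra! hneg
  have : 2 * ⟪w.1 v, γ⟫_ℝ / ⟪γ, γ⟫_ℝ < 0 := div_neg_of_neg_of_pos (by linarith) hγp
  linarith

lemma negRoot_iff (H : RS Φ Δ) (hρ : ∀ γ ∈ Δ, ⟪ρ, γ⟫_ℝ = 1) {β : V} (hβ : β ∈ Φ)
    (hn : ⟪ρ, β⟫_ℝ ≤ 0) : IsNegRoot Φ Δ β := by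
  obtain ⟨c, hc, h⟩ := H.pos_coeff hρ (H.neg_mem hβ) (by rw [inner_neg_right]; linarith)
  refine ⟨hβ, fun γ => - c γ, ?_, fun γ hγ => neg_nonpos.2 (h γ hγ)⟩
  rw [← neg_neg β, hc, ← Finset.sum_neg_distrib]
  exact Finset.sum_congr rfl fun γ _ => by push_cast; rw [neg_smul]

lemma existence [FiniteDimensional ℝ V] (H : RS Φ Δ) (hρ : ∀ γ ∈ Δ, ⟪ρ, γ⟫_ℝ = 1)
    {α : V} (hα : α ∈ Δ) :
    ∃ w ∈ weylGroup Φ, (∀ β ∈ (Δ : Set V) \ {α}, w β ∈ Δ) ∧ IsNegRoot Φ Δ (w α) := by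
  classical
  obtain ⟨N, hN0, hN⟩ : ∃ N : ℕ, 0 < N ∧ ∀ β ∈ Φ, ⟪ρ, β⟫_ℝ ≤ N := by
    obtain ⟨M, hM⟩ := (Φ.image (fun β => ⟪ρ, β⟫_ℝ)).bddAbove
    obtain ⟨N, hN⟩ := exists_nat_ge M
    refine ⟨N + 1, by omega, fun β hβ => ?_⟩
    have := hM (Finset.mem_coe.2 (Finset.mem_image_of_mem _ hβ))
    push_cast; linarith
  obtain ⟨v, hv⟩ := H.exists_dual (fun x => if x = α then (-(N:ℤ) : ℤ) else ((1 : ℤ) : ℝ))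
  have hvα : ⟪v, α⟫_ℝ = -N := by rw [hv α hα]; simp
  have hint : ∀ β ∈ Φ, ∃ k : ℤ, ⟪v, β⟫_ℝ = k := by
    intro β hβ
    obtain ⟨c, hc, -⟩ := H.hbase β hβ
    refine ⟨∑ γ ∈ Δ, c γ * (if γ = α then (-(N:ℤ)) else 1), ?_⟩
    rw [hc, inner_sum]; push_cast
    refine Finset.sum_congr rfl fun γ hγ => ?_
    rw [inner_smul_right, hv γ hγ]; push_cast; rfl
  have hreg0 : ∀ β ∈ Φ, 0 ≤ ⟪ρ, β⟫_ℝ → ⟪v, β⟫_ℝ ≠ 0 := by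
    intro β hβ hp
    obtain ⟨c, hc, h⟩ := H.pos_coeff hρ hβ hp
    have e : ⟪v, β⟫_ℝ = ⟪ρ, β⟫_ℝ - (N + 1) * c α := by
      have e1 : ⟪v - ρ, β⟫_ℝ = -(N + 1) * c α := by
        rw [hc, inner_sum, Finset.sum_eq_single α]
        · rw [inner_smul_right, inner_sub_left, hvα, hρ α hα]; ring
        · intro x hx hxα
          rw [inner_smul_right, inner_sub_left, hv x hx, hρ x hx]; simp [hxα]
        · intro h; exact absurd hα h
      rw [inner_sub_left] at e1; linarith
    rcases (h α hα).eq_or_lt with h0 | h0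
    · rw [e, ← h0]; simpa using H.inner_ne hρ hβ
    · have h1 : (1:ℝ) ≤ c α := by exact_mod_cast h0
      have h2 := hN β hβ
      have h3 : (0:ℝ) ≤ N := by positivity
      rw [e]; nlinarith
  have hreg : ∀ β ∈ Φ, ⟪v, β⟫_ℝ ≠ 0 := by
    intro β hβ
    rcases le_total 0 ⟪ρ, β⟫_ℝ with h | h
    · exact hreg0 β hβ h
    · have := hreg0 (-β) (H.neg_mem hβ) (by rw [inner_neg_right]; linarith)
      rw [inner_neg_right] at this; simpa using this
  obtain ⟨w, hw, hdom⟩ := H.exists_dominant hρ v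
  have hinv : ∀ γ ∈ Φ, w⁻¹ γ ∈ Φ := H.W_mem (inv_mem hw)
  have hww : ∀ x, w (w⁻¹ x) = x := fun x => by
    rw [← LinearEquiv.mul_apply, mul_inv_cancel]; rfl
  have hww' : ∀ x, w⁻¹ (w x) = x := fun x => by
    rw [← LinearEquiv.mul_apply, inv_mul_cancel]; rfl
  have hdom' : ∀ γ ∈ Δ, 1 ≤ ⟪v, w⁻¹ γ⟫_ℝ := by
    intro γ hγ
    have h1 := hdom γ hγ
    rw [← hww γ, W_inner hw] at h1
    have h2 := hreg _ (hinv γ (H.hΔΦ hγ))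
    obtain ⟨k, hk⟩ := hint _ (hinv γ (H.hΔΦ hγ))
    rw [hk] at h1 h2 ⊢
    have h3 : (0:ℝ) < k := lt_of_le_of_ne h1 h2.symm
    have h4 : (0:ℤ) < k := by exact_mod_cast h3
    exact_mod_cast h4
  refine ⟨w, hw, ?_, ?_⟩
  · rintro β ⟨hβ, hβα⟩
    have hβα' : β ≠ α := hβα
    have hβΦ : β ∈ Φ := H.hΔΦ hβ
    have hvβ : ⟪v, β⟫_ℝ = 1 := by rw [hv β hβ]; simp [hβα']
    have hwβ := H.W_mem hw β hβΦ
    have hpos : 0 ≤ ⟪ρ, w β⟫_ℝ := by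
      by_contra! hcon
      have := H.dom_nonpos hρ hwβ hcon.le hdom
      rw [W_inner hw, hvβ] at this
      linarith
    obtain ⟨c, hc, h⟩ := H.pos_coeff hρ hwβ hpos
    have e : (1:ℝ) = ∑ γ ∈ Δ, (c γ : ℝ) * ⟪v, w⁻¹ γ⟫_ℝ := by
      rw [← hvβ, ← hww' β, hc, map_sum, inner_sum]
      refine Finset.sum_congr rfl fun γ hγ => ?_
      rw [map_smul, inner_smul_right]
    have hle : (∑ γ ∈ Δ, (c γ : ℝ)) ≤ 1 := by
      rw [e]
      refine Finset.sum_le_sum fun γ hγ => ?_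
      have h1 : (0:ℝ) ≤ c γ := by exact_mod_cast h γ hγ
      exact le_mul_of_one_le_right h1 (hdom' γ hγ)
    have hle' : (∑ γ ∈ Δ, c γ) ≤ 1 := by exact_mod_cast hle
    obtain ⟨δ, hδ, hcδ⟩ : ∃ δ ∈ Δ, c δ ≠ 0 := by
      by_contra! hcon
      apply H.ne_zero hwβ
      rw [hc]; exact Finset.sum_eq_zero fun γ hγ => by rw [hcon γ hγ]; simp
    have hδ1 : 1 ≤ c δ := by have := h δ hδ; omega
    have hsum := Finset.add_sum_erase Δ c hδ
    have hnn : ∀ γ ∈ Δ.erase δ, 0 ≤ c γ := fun γ hγ => h γ (Finset.mem_of_mem_erase hγ)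
    have hnn2 := Finset.sum_nonneg hnn
    have hz : ∑ γ ∈ Δ.erase δ, c γ = 0 := by omega
    have hc1 : c δ = 1 := by omega
    have hz' := (Finset.sum_eq_zero_iff_of_nonneg hnn).1 hz
    have : w β = δ := by
      rw [hc, Finset.sum_eq_single δ]
      · rw [hc1]; simp
      · intro x hx hxδ
        rw [hz' x (Finset.mem_erase.2 ⟨hxδ, hx⟩)]; simp
      · intro h; exact absurd hδ h
    rw [this]; exact hδ
  · have hwα := H.W_mem hw α (H.hΔΦ hα)
    apply H.negRoot_iff hρ hwα
    by_contra! hcon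
    have := H.dom_nonneg hρ hwα hcon.le hdom
    rw [W_inner hw, hvα] at this
    have : (0:ℝ) < N := by exact_mod_cast hN0
    linarith

/-- The sign of `w β` is determined. -/
lemma sign_of [FiniteDimensional ℝ V] (H : RS Φ Δ) (hρ : ∀ γ ∈ Δ, ⟪ρ, γ⟫_ℝ = 1)
    {α g : V} (hα : α ∈ Δ) (hgα : ⟪g, α⟫_ℝ = 1) (hg : ∀ γ ∈ Δ, γ ≠ α → ⟪g, γ⟫_ℝ = 0)
    {w : V ≃ₗ[ℝ] V} (hw : w ∈ weylGroup Φ)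
    (h1 : ∀ β ∈ (Δ : Set V) \ {α}, w β ∈ Δ) (h2 : IsNegRoot Φ Δ (w α)) {β : V} (hβ : β ∈ Φ) :
    (0 < ⟪g, β⟫_ℝ → ⟪ρ, w β⟫_ℝ < 0) ∧ (⟪g, β⟫_ℝ = 0 → ⟪ρ, w β⟫_ℝ = ⟪ρ, β⟫_ℝ) := by
  classical
  constructor
  · intro hp
    have hdom : ∀ δ ∈ Δ, 0 ≤ ⟪-(w g), δ⟫_ℝ := by
      intro δ hδ
      have hsub : (Δ.erase α).image w ⊆ Δ := by
        intro x hx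
        obtain ⟨y, hy, rfl⟩ := Finset.mem_image.1 hx
        exact h1 y ⟨Finset.mem_of_mem_erase hy, Finset.ne_of_mem_erase hy⟩
      have himg : ∀ x ∈ (Δ.erase α).image w, ⟪w g, x⟫_ℝ = 0 := by
        intro x hx
        obtain ⟨y, hy, rfl⟩ := Finset.mem_image.1 hx
        rw [W_inner hw]
        exact hg y (Finset.mem_of_mem_erase hy) (Finset.ne_of_mem_erase hy)
      by_cases hδi : δ ∈ (Δ.erase α).image w
      · rw [inner_neg_left, himg δ hδi]; simp
      · have hcard : (Δ \ (Δ.erase α).image w).card = 1 := by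
          rw [Finset.card_sdiff_of_subset hsub, Finset.card_image_of_injective _ w.injective,
            Finset.card_erase_of_mem hα]
          have : 0 < Δ.card := Finset.card_pos.2 ⟨α, hα⟩
          omega
        obtain ⟨α', hα'⟩ := Finset.card_eq_one.1 hcard
        have huniq : ∀ x ∈ Δ, x ∉ (Δ.erase α).image w → x = α' := by
          intro x hx hxi
          have : x ∈ Δ \ (Δ.erase α).image w := Finset.mem_sdiff.2 ⟨hx, hxi⟩
          rw [hα'] at this; simpa using this
        obtain ⟨-, c, hc, hc0⟩ := h2
        have e : (1:ℝ) = c δ * ⟪w g, δ⟫_ℝ := by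
          rw [← hgα, ← W_inner hw, hc, inner_sum, Finset.sum_eq_single δ]
          · rw [inner_smul_right]
          · intro x hx hxδ
            rw [inner_smul_right, himg x, mul_zero]
            by_contra hxi
            exact hxδ ((huniq x hx hxi).trans (huniq δ hδ hδi).symm)
          · intro h; exact absurd hδ h
        have hcδ : (c δ : ℝ) ≤ 0 := by exact_mod_cast hc0 δ hδ
        rw [inner_neg_left]
        by_contra! hcon
        nlinarith
    by_contra! hcon
    have := H.dom_nonneg hρ (H.W_mem hw β hβ) hcon hdom
    rw [inner_neg_left, W_inner hw] at this
    linarith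
  · intro hz
    obtain ⟨c, hc, -⟩ := H.hbase β hβ
    have hcα : (c α : ℝ) = 0 := by
      rw [← hz, hc, inner_sum, Finset.sum_eq_single α]
      · rw [inner_smul_right, hgα, mul_one]
      · intro x hx hxα; rw [inner_smul_right, hg x hx hxα, mul_zero]
      · intro h; exact absurd hα h
    rw [hc, map_sum, inner_sum, inner_sum]
    refine Finset.sum_congr rfl fun γ hγ => ?_
    rw [map_smul, inner_smul_right, inner_smul_right, hρ γ hγ]
    by_cases hγα : γ = α
    · rw [hγα, hcα]; ring
    · rw [hρ _ (h1 γ ⟨hγ, hγα⟩)]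

lemma uniqueness [FiniteDimensional ℝ V] (H : RS Φ Δ) (hρ : ∀ γ ∈ Δ, ⟪ρ, γ⟫_ℝ = 1)
    {α : V} (hα : α ∈ Δ) {w w' : V ≃ₗ[ℝ] V}
    (hw : w ∈ weylGroup Φ)
    (h1 : ∀ β ∈ (Δ : Set V) \ {α}, w β ∈ Δ) (h2 : IsNegRoot Φ Δ (w α))
    (hw' : w' ∈ weylGroup Φ)
    (h1' : ∀ β ∈ (Δ : Set V) \ {α}, w' β ∈ Δ) (h2' : IsNegRoot Φ Δ (w' α)) : w' = w := by
  classical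
  obtain ⟨g, hg⟩ := H.exists_dual (fun x => if x = α then 1 else 0)
  have hgα : ⟪g, α⟫_ℝ = 1 := by rw [hg α hα]; simp
  have hg0 : ∀ γ ∈ Δ, γ ≠ α → ⟪g, γ⟫_ℝ = 0 := fun γ hγ h => by rw [hg γ hγ]; simp [h]
  have : w' * w⁻¹ = 1 := by
    apply H.free hρ (mul_mem hw' (inv_mem hw))
    intro γ hγ
    have hb : w⁻¹ γ ∈ Φ := H.W_mem (inv_mem hw) γ (H.hΔΦ hγ)
    have hwb : w (w⁻¹ γ) = γ := by rw [← LinearEquiv.mul_apply, mul_inv_cancel]; rfl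
    rw [LinearEquiv.mul_apply]
    have A := H.sign_of hρ hα hgα hg0 hw h1 h2 hb
    rw [hwb, hρ γ hγ] at A
    rcases lt_trichotomy ⟪g, w⁻¹ γ⟫_ℝ 0 with h | h | h
    · have B := (H.sign_of hρ hα hgα hg0 hw' h1' h2' (H.neg_mem hb)).1
        (by rw [inner_neg_right]; linarith)
      rw [map_neg, inner_neg_right] at B; linarith
    · rw [(H.sign_of hρ hα hgα hg0 hw' h1' h2' hb).2 h, ← A.2 h]; norm_num
    · have := A.1 h; linarith
  exact mul_inv_eq_one.1 this

end RS

end RSAux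

theorem exists_unique_weyl_elt_mapping_theta_into_simples
    [FiniteDimensional ℝ V]
    (Φ Δ : Finset V)
    -- Φ is a root system in V:
    (h0 : (0 : V) ∉ Φ)
    (hspan : Submodule.span ℝ (Φ : Set V) = ⊤)
    (hrefl : ∀ a ∈ Φ, ∀ b ∈ Φ, b - (2 * ⟪b, a⟫_ℝ / ⟪a, a⟫_ℝ) • a ∈ Φ)
    -- Φ is crystallographic:
    (hcryst : ∀ a ∈ Φ, ∀ b ∈ Φ, ∃ n : ℤ, 2 * ⟪b, a⟫_ℝ / ⟪a, a⟫_ℝ = (n : ℝ))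
    -- Φ is reduced:
    (hred : ∀ a ∈ Φ, ∀ t : ℝ, t • a ∈ Φ → t = 1 ∨ t = -1)
    -- Δ is a base of Φ:
    (hΔΦ : (Δ : Set V) ⊆ (Φ : Set V))
    (hind : LinearIndependent ℝ (fun γ : (Δ : Set V) => (γ : V)))
    (hbase : ∀ β ∈ Φ, ∃ c : V → ℤ,
      β = ∑ γ ∈ Δ, (c γ : ℝ) • γ ∧ ((∀ γ ∈ Δ, 0 ≤ c γ) ∨ (∀ γ ∈ Δ, c γ ≤ 0)))
    -- the fixed simple root α, with θ = Δ \ {α}: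
    (α : V) (hα : α ∈ Δ) :
    ∃! w : weylGroup Φ,
      (∀ β ∈ (Δ : Set V) \ {α}, (w : V ≃ₗ[ℝ] V) β ∈ Δ) ∧
        IsNegRoot Φ Δ ((w : V ≃ₗ[ℝ] V) α) := by
  have H : RSAux.RS Φ Δ := ⟨h0, hspan, hrefl, hcryst, hred, hΔΦ, hind, hbase⟩
  obtain ⟨ρ, hρ⟩ := H.exists_dual (fun _ => 1)
  obtain ⟨w, hw, h1, h2⟩ := H.existence hρ hα
  refine ⟨⟨w, hw⟩, ⟨h1, h2⟩, ?_⟩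
  rintro ⟨w', hw'⟩ ⟨h1', h2'⟩
  exact Subtype.ext (H.uniqueness hρ hα hw h1 h2 hw' h1' h2')
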